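/- For n ≥ 3, the number of universal cycles for the set P_{n,2} of 2-permutations of [n] equals n^{n-2}·((n-2)!)^n. -/

import Mathlib

/-- `c` is a universal cycle for `k`-permutations of `[n]`, viewed as a cyclic
sequence of period `N`: every injective `k`-tuple appears exactly once as `k`
consecutive elements. -/
def IsUniversalCycle (n k N : ℕ) (c : ZMod N → Fin n) : Prop :=
  ∀ w : Fin k → Fin n, Function.Injective w →
    ∃! i : ZMod N, ∀ j : Fin k, c (i + (j : ℕ)) = w j

/-- Two cyclic sequences are the same universal cycle iff one is a rotation of
the other. -/
def RotEquiv {n k N : ℕ} (c c' : {c : ZMod N → Fin n // IsUniversalCycle n k N c}) : Prop :=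
  ∃ t : ZMod N, ∀ i, c'.1 i = c.1 (i + t)

/-- The self-maps of `V` fixing everything outside `A` and sending `A` into `A ∪ B` that are
acyclic on `A`, i.e. the spanning forests on `A ∪ B` with all edges directed towards the
roots `B`. -/
def rootedForests {V : Type*} [Fintype V] [DecidableEq V] (A B : Finset V) : Finset (V → V) :=
  {f | (∀ v ∈ A, f v ∈ A ∪ B) ∧ (∀ v ∉ A, f v = v) ∧
    ∀ X ⊆ A, X.Nonempty → ∃ v ∈ X, f v ∉ X}

theorem sum_choose_mul_pow_mul (a b : ℕ) :
    ∑ k ∈ Finset.range (a + 2), (a + 1).choose k * (b ^ k * (k * (a + 1) ^ (a + 1 - k))) =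
      (a + 1) * (b * (a + 1 + b) ^ a) := by
  rw [Finset.sum_range_succ', add_comm (a + 1) b, add_pow b (a + 1) a, Finset.mul_sum, Finset.mul_sum]
  simp only [zero_mul, mul_zero, add_zero]
  refine Finset.sum_congr rfl fun k _ => ?_
  have h := Nat.add_one_mul_choose_eq a k
  rw [Nat.add_sub_add_right]
  calc _ = ((a + 1).choose (k + 1) * (k + 1)) * (b ^ (k + 1) * (a + 1) ^ (a - k)) := by ring
    _ = _ := by rw [← h, Nat.cast_id]; ring

section
variable {V : Type*} [Fintype V] [DecidableEq V]

theorem card_rootedForests_fiber {A B S : Finset V} (hAB : Disjoint A B) (hS : S ⊆ A) :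
    ({f ∈ rootedForests A B | {v ∈ A | f v ∈ B} = S} : Finset (V → V)).card =
      B.card ^ S.card * (rootedForests (A \ S) S).card := by
  have hcard : B.card ^ S.card * (rootedForests (A \ S) S).card =
      (Fintype.piFinset (fun _ : S => B) ×ˢ rootedForests (A \ S) S).card := by
    simp
  rw [hcard]
  have hdisj : ∀ v ∈ A, v ∉ B := fun v hv hb => Finset.disjoint_left.1 hAB hv hb
  refine Finset.card_bij' (fun f _ => (fun v => f v, fun v => if v ∈ A \ S then f v else v))
    (fun g _ v => if h : v ∈ S then g.1 ⟨v, h⟩ else g.2 v) ?_ ?_ ?_ ?_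
  · intro f hf
    simp only [rootedForests, Finset.mem_filter, Finset.mem_univ, true_and] at hf
    obtain ⟨⟨h1, h2, h3⟩, h4⟩ := hf
    have hSB : ∀ v ∈ A, f v ∈ B ↔ v ∈ S := by
      intro v hv; rw [← h4]; simp [hv]
    simp only [rootedForests, Finset.mem_product, Fintype.mem_piFinset, Finset.mem_filter,
      Finset.mem_univ, true_and]
    refine ⟨fun v => (hSB v (hS v.2)).2 v.2, fun v hv => ?_, fun v hv => by simp_all, ?_⟩
    · have hv' := Finset.mem_sdiff.1 hv
      have := h1 v hv'.1
      have := hSB v hv'.1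
      grind
    · intro X hX hne
      obtain ⟨v, hv, hfv⟩ := h3 X (hX.trans Finset.sdiff_subset) hne
      exact ⟨v, hv, by rwa [if_pos (hX hv)]⟩
  · rintro ⟨g, f⟩ hg
    simp only [rootedForests, Finset.mem_product, Fintype.mem_piFinset, Finset.mem_filter,
      Finset.mem_univ, true_and] at hg
    obtain ⟨h0, h1, h2, h3⟩ := hg
    simp only [rootedForests, Finset.mem_filter, Finset.mem_univ, true_and]
    refine ⟨⟨fun v hv => ?_, fun v hv => ?_, fun X hX hne => ?_⟩, ?_⟩
    · split_ifs with h
      · exact Finset.mem_union_right _ (h0 _)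
      · have := h1 v (by grind)
        grind
    · grind
    · by_cases hXS : ∃ v ∈ X, v ∈ S
      · obtain ⟨v, hv, hvS⟩ := hXS
        refine ⟨v, hv, fun hmem => ?_⟩
        rw [dif_pos hvS] at hmem
        exact hdisj _ (hX hmem) (h0 _)
      · push Not at hXS
        obtain ⟨v, hv, hfv⟩ := h3 X (fun v hv => Finset.mem_sdiff.2 ⟨hX hv, hXS v hv⟩) hne
        exact ⟨v, hv, by rwa [dif_neg (hXS v hv)]⟩
    · ext v
      simp only [Finset.mem_filter]
      constructor
      · rintro ⟨hv, hb⟩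
        by_contra hvS
        rw [dif_neg hvS] at hb
        have := h1 v (by grind)
        grind
      · intro hv
        refine ⟨hS hv, ?_⟩
        rw [dif_pos hv]
        exact h0 _
  · intro f hf
    simp only [rootedForests, Finset.mem_filter, Finset.mem_univ, true_and] at hf
    obtain ⟨⟨h1, h2, h3⟩, h4⟩ := hf
    funext v
    grind
  · rintro ⟨g, f⟩ hg
    simp only [rootedForests, Finset.mem_product, Fintype.mem_piFinset, Finset.mem_filter,
      Finset.mem_univ, true_and] at hg
    obtain ⟨h0, h1, h2, h3⟩ := hg
    refine Prod.ext (funext fun v => by simp) (funext fun v => ?_)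
    grind

/-- Cayley's formula for rooted forests with a prescribed set of roots. -/
theorem card_rootedForests (A B : Finset V) (hAB : Disjoint A B) :
    (A.card + B.card) * (rootedForests A B).card = B.card * (A.card + B.card) ^ A.card := by
  induction hn : A.card using Nat.strong_induction_on generalizing A B with
  | _ a ih =>
  subst hn
  rcases A.eq_empty_or_nonempty with rfl | hA
  · have : rootedForests ∅ B = {id} := by
      ext f
      simp only [rootedForests, Finset.mem_filter, Finset.mem_singleton, funext_iff]
      simp +contextual [Finset.subset_empty]
    simp [this]
  · obtain ⟨a, ha⟩ := Nat.exists_eq_succ_of_ne_zero hA.card_pos.ne'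
    have hsum : (rootedForests A B).card =
        ∑ S ∈ A.powerset, B.card ^ S.card * (rootedForests (A \ S) S).card := by
      rw [Finset.card_eq_sum_card_fiberwise (f := fun f : V → V => {v ∈ A | f v ∈ B})
        (t := A.powerset) (fun f _ => Finset.mem_powerset.2 (Finset.filter_subset _ _))]
      exact Finset.sum_congr rfl fun S hS =>
        card_rootedForests_fiber hAB (Finset.mem_powerset.1 hS)
    have hterm : ∀ S ∈ A.powerset, A.card * (B.card ^ S.card * (rootedForests (A \ S) S).card) =
        B.card ^ S.card * (S.card * A.card ^ (A.card - S.card)) := by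
      intro S hS
      rw [Finset.mem_powerset] at hS
      have hc := Finset.card_sdiff_add_card_eq_card hS
      rcases S.eq_empty_or_nonempty with rfl | hne
      · have : rootedForests A ∅ = ∅ := by
          ext f
          simp only [rootedForests, Finset.mem_filter, Finset.notMem_empty, iff_false]
          rintro ⟨-, h1, -, h3⟩
          obtain ⟨v, hv, hfv⟩ := h3 A subset_rfl hA
          simpa [hfv] using h1 v hv
        simp [this]
      · have := ih (A \ S).card (by have := hne.card_pos; omega) (A \ S) S
          Finset.sdiff_disjoint rfl
        rw [hc] at this
        rw [mul_left_comm, this, ← hc, Nat.add_sub_cancel]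
    have key : A.card * (rootedForests A B).card =
        A.card * (B.card * (A.card + B.card) ^ a) := by
      rw [hsum, Finset.mul_sum, Finset.sum_congr rfl hterm,
        Finset.sum_powerset_apply_card (fun k => B.card ^ k * (k * A.card ^ (A.card - k)))]
      simp only [smul_eq_mul, ha]
      exact sum_choose_mul_pow_mul a B.card
    rw [Nat.eq_of_mul_eq_mul_left hA.card_pos key, ha, pow_succ]
    ring

theorem card_rootedForests_compl_singleton {q : ℕ} (hV : Fintype.card V = q + 2) (r : V) :
    (rootedForests {r}ᶜ {r}).card = (q + 2) ^ q := by
  have h := card_rootedForests ({r}ᶜ : Finset V) {r} (by simp)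
  rw [Finset.card_compl, hV, Finset.card_singleton] at h
  have h' : q + 2 - 1 = q + 1 := rfl
  rw [h', one_mul, show q + 1 + 1 = q + 2 from rfl, pow_succ'] at h
  exact Nat.eq_of_mul_eq_mul_left (by omega) h

theorem card_injective_avoiding_with_value {q : ℕ} (hV : Fintype.card V = q + 2) {v w : V}
    (hvw : w ≠ v) (i : Fin (q + 1)) :
    ({g | Function.Injective g ∧ (∀ j, g j ≠ v) ∧ g i = w} : Finset (Fin (q + 1) → V)).card =
      q.factorial := by
  have e : {g : Fin (q + 1) → V // Function.Injective g ∧ (∀ j, g j ≠ v) ∧ g i = w} ≃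
      ({j : Fin (q + 1) // j ≠ i} ↪ {u : V // u ∉ ({v, w} : Finset V)}) :=
    { toFun := fun g => ⟨fun j => ⟨g.1 j, by
          have h1 := g.2.2.1 j
          have h2 : g.1 j ≠ w := fun h => j.2 (g.2.1 (h.trans g.2.2.2.symm))
          simp [h1, h2]⟩, fun j k h => Subtype.ext (g.2.1 (by simpa using h))⟩
      invFun := fun g => ⟨fun j => if h : j = i then w else g ⟨j, h⟩, by
        have hg : ∀ j : {j : Fin (q + 1) // j ≠ i}, (g j : V) ≠ v ∧ (g j : V) ≠ w := by
          intro j; simpa using (g j).2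
        refine ⟨fun j k h => ?_, fun j => ?_, by simp⟩
        · by_cases hj : j = i <;> by_cases hk : k = i
          · rw [hj, hk]
          · simp only [hj, hk, dite_true, dite_false] at h
            exact absurd h.symm (hg _).2
          · simp only [hj, hk, dite_true, dite_false] at h
            exact absurd h (hg _).2
          · simp only [hj, hk, dite_false] at h
            simpa using g.injective (Subtype.ext h)
        · by_cases hj : j = i
          · simpa [hj] using hvw
          · simpa [hj] using (hg ⟨j, hj⟩).1⟩
      left_inv := fun g => by
        ext j
        by_cases hj : j = i
        · subst hj; simp [g.2.2.2]
        · simp only [dif_neg hj]; rfl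
      right_inv := fun g => by
        ext j
        simp [j.2] }
  rw [← Fintype.card_subtype, Fintype.card_congr e, Fintype.card_embedding_eq]
  have h1 : Fintype.card {j : Fin (q + 1) // j ≠ i} = q := by simp [Fintype.card_subtype_compl]
  have h2 : Fintype.card {u : V // u ∉ ({v, w} : Finset V)} = q := by
    rw [Fintype.card_subtype_compl, Fintype.card_coe, Finset.card_pair hvw.symm, hV]
    rfl
  rw [h1, h2, Nat.descFactorial_self]
end

theorem Nat.exists_lt_count_eq {p : ℕ → Prop} [DecidablePred p] {j n : ℕ}
    (h : j < Nat.count p n) : ∃ t < n, p t ∧ Nat.count p t = j := by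
  have hj : ∀ hf : (Set.ofPred p).Finite, j < hf.toFinset.card :=
    fun hf => h.trans_le (Nat.count_le_card hf n)
  exact ⟨Nat.nth p j, Nat.nth_lt_of_lt_count h, Nat.nth_mem j hj, Nat.count_nth hj⟩

section
variable {V : Type*} [DecidableEq V]

/-- The number of visits of the walk `x` to `v` strictly before time `t`. -/
def visits (x : ℕ → V) (t : ℕ) (v : V) : ℕ := Nat.count (fun i => x i = v) t

/-- During its first `T` steps the walk `x` leaves each vertex `v` successively through
`σ v 0, σ v 1, …, σ v q`, using each of these exits at most once. -/
def FollowsRotors {q : ℕ} (σ : V → Fin (q + 1) → V) (x : ℕ → V) (T : ℕ) : Prop :=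
  ∀ t < T, visits x t (x t) < q + 1 ∧ x (t + 1) = σ (x t) (Fin.ofNat (q + 1) (visits x t (x t)))

/-- Each `σ v` lists distinct vertices other than `v`, and the last exits `σ v q` of the vertices
`v ≠ r` form a tree directed towards `r`. -/
def IsRotorTree {q : ℕ} (r : V) (σ : V → Fin (q + 1) → V) : Prop :=
  (∀ v, Function.Injective (σ v)) ∧ (∀ v j, σ v j ≠ v) ∧
    ∀ X : Finset V, r ∉ X → X.Nonempty → ∃ v ∈ X, σ v (Fin.last q) ∉ X

/-- The walk `x` is closed after `N` steps and traverses every arc of the complete digraph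
exactly once. -/
def IsEulerianTour (N : ℕ) (x : ℕ → V) : Prop :=
  x N = x 0 ∧ ∀ a b, a ≠ b → ∃! t, t < N ∧ x t = a ∧ x (t + 1) = b

theorem visits_succ (x : ℕ → V) (t : ℕ) (v : V) :
    visits x (t + 1) v = visits x t v + if x t = v then 1 else 0 :=
  Nat.count_succ _ t

theorem sum_visits [Fintype V] (x : ℕ → V) (t : ℕ) : ∑ v, visits x t v = t := by
  induction t with
  | zero => simp [visits]
  | succ t ih => simp [visits_succ, Finset.sum_add_distrib, ih]

theorem visits_add_ite_eq (x : ℕ → V) (t : ℕ) (v : V) :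
    visits x t v + (if x t = v then 1 else 0) =
      visits (fun i => x (i + 1)) t v + if x 0 = v then 1 else 0 := by
  rw [← visits_succ]
  exact Nat.count_succ' _ t

theorem exists_walk (σ : V → ℕ → V) (r : V) :
    ∃ x : ℕ → V, x 0 = r ∧ ∀ t, x (t + 1) = σ (x t) (visits x t (x t)) := by
  let step : V × (V → ℕ) → V × (V → ℕ) := fun p =>
    (σ p.1 (p.2 p.1), fun v => p.2 v + if p.1 = v then 1 else 0)
  let s : ℕ → V × (V → ℕ) := fun t => step^[t] (r, fun _ => 0)
  have hs : ∀ t, s (t + 1) = step (s t) := fun t => Function.iterate_succ_apply' step t _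
  have hv : ∀ t v, (s t).2 v = visits (fun i => (s i).1) t v := by
    intro t
    induction t with
    | zero => intro v; simp [s, visits]
    | succ t ih => intro v; rw [hs, visits_succ, ← ih]
  refine ⟨fun t => (s t).1, rfl, fun t => ?_⟩
  rw [← hv]
  exact congrArg Prod.fst (hs t)

namespace FollowsRotors

variable {q T : ℕ} {σ σ' : V → Fin (q + 1) → V} {x y : ℕ → V}

theorem visits_le (h : FollowsRotors σ x T) (v : V) : visits x T v ≤ q + 1 := by
  induction T with
  | zero => simp [visits]
  | succ t ih =>
    have h1 := ih fun i hi => h i (by omega)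
    have h2 := (h t (by omega)).1
    rw [visits_succ]
    split_ifs with hv
    · subst hv; omega
    · omega

theorem arc_injective (h : FollowsRotors σ x T) (hσ : ∀ v, Function.Injective (σ v))
    {t t' : ℕ} (ht : t < T) (ht' : t' < T) (h1 : x t = x t') (h2 : x (t + 1) = x (t' + 1)) :
    t = t' := by
  obtain ⟨a, b⟩ := h t ht
  obtain ⟨a', b'⟩ := h t' ht'
  rw [b, b', h1] at h2
  have h3 := congrArg Fin.val (hσ _ h2)
  rw [h1] at a
  rw [Fin.val_ofNat, Fin.val_ofNat, Nat.mod_eq_of_lt a, Nat.mod_eq_of_lt a'] at h3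
  exact Nat.count_injective (p := fun i => x i = x t') h1 rfl h3

theorem step_ne (h : FollowsRotors σ x T) (hσ : ∀ v j, σ v j ≠ v) {t : ℕ} (ht : t < T) :
    x (t + 1) ≠ x t := by
  rw [(h t ht).2]
  exact hσ _ _

theorem eq_of_start (hx : FollowsRotors σ x T) (hy : FollowsRotors σ y T) (h0 : x 0 = y 0)
    {t : ℕ} (ht : t ≤ T) : x t = y t := by
  suffices h : x t = y t ∧ visits x t = visits y t from h.1
  induction t with
  | zero => exact ⟨h0, by ext v; simp [visits]⟩
  | succ t ih =>
    obtain ⟨h1, h2⟩ := ih (by omega)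
    refine ⟨?_, ?_⟩
    · rw [(hx t ht).2, (hy t ht).2, h1, h2]
    · ext v
      rw [visits_succ, visits_succ, h1, h2]

theorem exists_arc (h : FollowsRotors σ x T) {v : V} {j : Fin (q + 1)} (hj : j < visits x T v) :
    ∃ t < T, x t = v ∧ visits x t v = j ∧ x (t + 1) = σ v j := by
  obtain ⟨t, ht, hv, hc⟩ := Nat.exists_lt_count_eq hj
  refine ⟨t, ht, hv, hc, ?_⟩
  rw [(h t ht).2, hv, show visits x t v = j from hc]
  congr 1
  exact Fin.ext (by simp)

theorem rotors_unique (h : FollowsRotors σ x T) (h' : FollowsRotors σ' x T)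
    (hv : ∀ v, visits x T v = q + 1) : σ = σ' := by
  funext v j
  obtain ⟨t, ht, h1, h2, h3⟩ := h.exists_arc (v := v) (j := j) (by rw [hv]; exact j.2)
  rw [← h3, (h' t ht).2, h1, h2]
  congr 1
  exact Fin.ext (by simp)

theorem card_image_predecessors {r : V} (h : FollowsRotors σ x T)
    (hσ : IsRotorTree r σ) (v : V) :
    (({t ∈ Finset.range T | x (t + 1) = v}).image x).card = visits (fun i => x (i + 1)) T v := by
  rw [visits, Nat.count_eq_card_filter_range]
  refine Finset.card_image_of_injOn fun t ht t' ht' htt => ?_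
  simp only [Finset.coe_filter, Finset.mem_range, Set.mem_ofPred_eq] at ht ht'
  exact h.arc_injective hσ.1 ht.1 ht'.1 htt (ht.2.trans ht'.2.symm)

variable [Fintype V] {r : V}

theorem image_predecessors_subset (h : FollowsRotors σ x T) (hσ : IsRotorTree r σ) (v : V) :
    ({t ∈ Finset.range T | x (t + 1) = v}).image x ⊆ {v}ᶜ := by
  intro u hu
  obtain ⟨t, ht, rfl⟩ := Finset.mem_image.1 hu
  rw [Finset.mem_filter, Finset.mem_range] at ht
  have := h.step_ne hσ.2.1 ht.1
  rw [ht.2] at this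
  simpa using this.symm

theorem visits_shift_le (hV : Fintype.card V = q + 2) (h : FollowsRotors σ x T)
    (hσ : IsRotorTree r σ) (v : V) : visits (fun i => x (i + 1)) T v ≤ q + 1 := by
  rw [← h.card_image_predecessors hσ]
  refine (Finset.card_le_card (h.image_predecessors_subset hσ v)).trans ?_
  rw [Finset.card_compl, hV, Finset.card_singleton]
  omega

theorem exists_predecessor (hV : Fintype.card V = q + 2) (h : FollowsRotors σ x T)
    (hσ : IsRotorTree r σ) {u v : V} (hv : visits (fun i => x (i + 1)) T v = q + 1)
    (huv : u ≠ v) : ∃ t < T, x t = u ∧ x (t + 1) = v := by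
  have heq := Finset.eq_of_subset_of_card_le (h.image_predecessors_subset hσ v) (by
    rw [h.card_image_predecessors hσ, hv, Finset.card_compl, hV, Finset.card_singleton]
    omega)
  have hu : u ∈ ({v}ᶜ : Finset V) := by simpa using huv
  rw [← heq] at hu
  obtain ⟨t, ht, rfl⟩ := Finset.mem_image.1 hu
  rw [Finset.mem_filter, Finset.mem_range] at ht
  exact ⟨t, ht.1, rfl, ht.2⟩

/-- A walk that starts at `r` can only get stuck at `r`, after having exhausted all exits of
all vertices. -/
theorem eq_root_and_visits_eq (hV : Fintype.card V = q + 2) (h : FollowsRotors σ x T)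
    (hσ : IsRotorTree r σ) (h0 : x 0 = r) (hT : q < visits x T (x T)) :
    x T = r ∧ ∀ v, visits x T v = q + 1 := by
  have hroot : x T = r := by
    by_contra hne
    have h1 := visits_add_ite_eq x T (x T)
    have h2 := h.visits_shift_le hV hσ (x T)
    rw [if_pos rfl, if_neg (by rw [h0]; exact Ne.symm hne)] at h1
    omega
  have hbal : ∀ v, visits x T v = visits (fun i => x (i + 1)) T v := by
    intro v
    have h1 := visits_add_ite_eq x T v
    rw [hroot, h0] at h1
    omega
  refine ⟨hroot, ?_⟩
  by_contra hex
  push Not at hex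
  obtain ⟨w, hw⟩ := hex
  rw [hroot] at hT
  obtain ⟨v, hv, hfv⟩ := hσ.2.2 {v | visits x T v ≠ q + 1}
    (by have := h.visits_le r; simp; omega) ⟨w, by simpa using hw⟩
  simp only [Finset.mem_filter, Finset.mem_univ, true_and, not_not] at hv hfv
  obtain ⟨t, ht, rfl, hs⟩ := h.exists_predecessor hV hσ ((hbal _).symm.trans hfv)
    (hσ.2.1 v (Fin.last q)).symm
  obtain ⟨h1, h2⟩ := h t ht
  have h3 := congrArg Fin.val (hσ.1 _ (h2.symm.trans hs))
  rw [Fin.val_ofNat, Nat.mod_eq_of_lt h1, Fin.val_last] at h3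
  have h4 : visits x (t + 1) (x t) ≤ visits x T (x t) := Nat.count_monotone _ ht
  have h5 := visits_succ x t (x t)
  rw [if_pos rfl] at h5
  have := h.visits_le (x t)
  omega

end FollowsRotors

variable [Fintype V] {q N : ℕ} {r : V} {σ : V → Fin (q + 1) → V} {x : ℕ → V}

theorem IsRotorTree.exists_followsRotors (hV : Fintype.card V = q + 2)
    (hN : N = (q + 2) * (q + 1)) (hσ : IsRotorTree r σ) :
    ∃ x : ℕ → V, x 0 = r ∧ FollowsRotors σ x N ∧ IsEulerianTour N x := by
  obtain ⟨x, h0, hx⟩ := exists_walk (fun v j => σ v (Fin.ofNat (q + 1) j)) r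
  have hstuck : ∃ T, FollowsRotors σ x T ∧ q < visits x T (x T) := by
    by_contra hno
    push Not at hno
    have hall : ∀ T, FollowsRotors σ x T := by
      intro T
      induction T with
      | zero => intro t ht; omega
      | succ T ih =>
        intro t ht
        exact ⟨Nat.lt_succ_of_le (hno t fun i hi => ih i (by omega)), hx t⟩
    have h1 := sum_visits x (N + 1)
    have h2 := Finset.sum_le_card_nsmul Finset.univ (visits x (N + 1)) (q + 1)
      fun v _ => (hall (N + 1)).visits_le v
    rw [h1, Finset.card_univ, hV, smul_eq_mul] at h2
    omega
  obtain ⟨T, hT, hq⟩ := hstuck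
  obtain ⟨hr, hv⟩ := hT.eq_root_and_visits_eq hV hσ h0 hq
  have hTN : T = N := by
    have h1 := sum_visits x T
    simp only [hv, Finset.sum_const, Finset.card_univ, hV, smul_eq_mul] at h1
    omega
  subst hTN
  refine ⟨x, h0, hT, hr.trans h0.symm, fun a b hab => ?_⟩
  have himg : Finset.univ.image (σ a) = {a}ᶜ := by
    refine Finset.eq_of_subset_of_card_le (fun b hb => ?_) ?_
    · obtain ⟨j, -, rfl⟩ := Finset.mem_image.1 hb
      simpa using hσ.2.1 a j
    · rw [Finset.card_image_of_injective _ (hσ.1 a), Finset.card_compl, hV]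
      simp
  have hb : b ∈ Finset.univ.image (σ a) := by rw [himg]; simpa using hab.symm
  obtain ⟨j, -, rfl⟩ := Finset.mem_image.1 hb
  obtain ⟨t, ht, h1, -, h3⟩ := hT.exists_arc (v := a) (j := j) (by rw [hv]; exact j.2)
  exact ⟨t, ⟨ht, h1, h3⟩, fun t' ⟨ht', h1', h3'⟩ =>
    hT.arc_injective hσ.1 ht' ht (h1'.trans h1.symm) (h3'.trans h3.symm)⟩

namespace IsEulerianTour

theorem step_ne (hV : Fintype.card V = q + 2) (hN : N = (q + 2) * (q + 1))
    (hx : IsEulerianTour N x) {t : ℕ} (ht : t < N) : x t ≠ x (t + 1) := by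
  have heq := Finset.eq_of_subset_of_card_le (s := (Finset.univ : Finset V).offDiag)
    (t := (Finset.range N).image fun t => (x t, x (t + 1))) (fun p hp => by
      obtain ⟨t, ⟨ht, h1, h2⟩, -⟩ := hx.2 p.1 p.2 (Finset.mem_offDiag.1 hp).2.2
      exact Finset.mem_image.2 ⟨t, Finset.mem_range.2 ht, Prod.ext h1 h2⟩) (by
      refine Finset.card_image_le.trans (le_of_eq ?_)
      rw [Finset.card_range, Finset.offDiag_card, Finset.card_univ, hV, hN, ← Nat.mul_sub_one]
      rfl)
  have : (x t, x (t + 1)) ∈ (Finset.univ : Finset V).offDiag := by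
    rw [heq]
    exact Finset.mem_image_of_mem _ (Finset.mem_range.2 ht)
  exact (Finset.mem_offDiag.1 this).2.2

theorem visits_eq (hV : Fintype.card V = q + 2) (hN : N = (q + 2) * (q + 1))
    (hx : IsEulerianTour N x) (v : V) : visits x N v = q + 1 := by
  have hle : ∀ v ∈ Finset.univ, q + 1 ≤ visits x N v := by
    intro v _
    have hsub : ({v}ᶜ : Finset V) ⊆
        ({t ∈ Finset.range N | x t = v}).image fun t => x (t + 1) := by
      intro b hb
      obtain ⟨t, ⟨ht, h1, h2⟩, -⟩ := hx.2 v b (by simpa [eq_comm] using hb)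
      exact Finset.mem_image.2 ⟨t, by simp [ht, h1], h2⟩
    have h := (Finset.card_le_card hsub).trans Finset.card_image_le
    rw [Finset.card_compl, hV, Finset.card_singleton, ← Nat.count_eq_card_filter_range] at h
    exact h
  have hsum : ∑ _v : V, (q + 1) = ∑ v, visits x N v := by
    rw [sum_visits, hN]
    simp [hV]
  exact ((Finset.sum_eq_sum_iff_of_le hle).1 hsum v (Finset.mem_univ v)).symm

theorem arc_injective (hV : Fintype.card V = q + 2) (hN : N = (q + 2) * (q + 1))
    (hx : IsEulerianTour N x) {t t' : ℕ} (ht : t < N) (ht' : t' < N) (h1 : x t = x t')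
    (h2 : x (t + 1) = x (t' + 1)) : t = t' :=
  (hx.2 _ _ (hx.step_ne hV hN ht)).unique ⟨ht, rfl, rfl⟩ ⟨ht', h1.symm, h2.symm⟩

theorem exists_isRotorTree (hV : Fintype.card V = q + 2) (hN : N = (q + 2) * (q + 1))
    (hx : IsEulerianTour N x) :
    ∃ σ : V → Fin (q + 1) → V, IsRotorTree (x 0) σ ∧ FollowsRotors σ x N := by
  have htime : ∀ v (j : Fin (q + 1)), ∃ t < N, x t = v ∧ visits x t v = j := fun v j =>
    Nat.exists_lt_count_eq (lt_of_lt_of_eq j.2 (hx.visits_eq hV hN v).symm)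
  choose τ hτN hτv hτc using htime
  refine ⟨fun v j => x (τ v j + 1), ⟨fun v j k hjk => ?_, fun v j => ?_, fun X hr hX => ?_⟩,
    fun t ht => ?_⟩
  · have := hx.arc_injective hV hN (hτN v j) (hτN v k) ((hτv v j).trans (hτv v k).symm) hjk
    exact Fin.ext (by rw [← hτc v j, ← hτc v k, this])
  · have := hx.step_ne hV hN (hτN v j)
    rw [hτv] at this
    exact this.symm
  · obtain ⟨v, hv, hmax⟩ := Finset.exists_max_image X (fun v => τ v (Fin.last q)) hX
    refine ⟨v, hv, fun hmem => ?_⟩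
    have hle := hmax _ hmem
    set t := τ v (Fin.last q) with ht
    set u := x (t + 1) with hu
    have htN : t + 1 < N := by
      refine lt_of_le_of_ne (hτN v _) fun h => hr ?_
      rwa [← hx.1, ← h]
    have h1 : visits x (t + 1 + 1) u ≤ visits x N u := Nat.count_monotone _ htN
    rw [hx.visits_eq hV hN, visits_succ, if_pos hu.symm] at h1
    have h2 : visits x (τ u (Fin.last q) + 1) u ≤ visits x (t + 1) u :=
      Nat.count_monotone _ (Nat.succ_le_succ hle)
    rw [visits_succ, if_pos (hτv _ _), hτc, Fin.val_last] at h2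
    omega
  · have hlt : visits x t (x t) < q + 1 := by
      have h1 : visits x (t + 1) (x t) ≤ visits x N (x t) := Nat.count_monotone _ ht
      rw [hx.visits_eq hV hN, visits_succ, if_pos rfl] at h1
      omega
    refine ⟨hlt, ?_⟩
    have h := hτc (x t) (Fin.ofNat (q + 1) (visits x t (x t)))
    rw [Fin.val_ofNat, Nat.mod_eq_of_lt hlt] at h
    have := Nat.count_injective (p := fun i => x i = x t) (hτv _ _) rfl h
    exact congrArg (fun i => x (i + 1)) this.symm

end IsEulerianTour

end

section
variable {V : Type*} [Fintype V] [DecidableEq V] {q N : ℕ}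

theorem card_isRotorTree (hV : Fintype.card V = q + 2) {r s : V} (hrs : r ≠ s) :
    Nat.card {σ : V → Fin (q + 1) → V // IsRotorTree r σ ∧ σ r 0 = s} =
      (q + 2) ^ q * q.factorial ^ (q + 2) := by
  classical
  rw [Nat.card_eq_fintype_card, Fintype.card_subtype, Finset.card_eq_sum_card_fiberwise
    (f := fun σ v => if v = r then r else σ v (Fin.last q)) (t := rootedForests {r}ᶜ {r})]
  · rw [← card_rootedForests_compl_singleton hV r, ← smul_eq_mul]
    refine Finset.sum_const_nat fun f hf => ?_
    simp only [rootedForests, Finset.mem_filter, Finset.mem_univ, true_and] at hf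
    obtain ⟨-, hfix, hac⟩ := hf
    have hfr : f r = r := hfix r (by simp)
    have hfv : ∀ v, v ≠ r → f v ≠ v := fun v hv => by
      obtain ⟨u, hu, hfu⟩ := hac {v} (by simpa using hv.symm) (Finset.singleton_nonempty v)
      rw [Finset.mem_singleton] at hu
      subst hu
      simpa using hfu
    have hpi : ({σ ∈ ({σ | IsRotorTree r σ ∧ σ r 0 = s} : Finset (V → Fin (q + 1) → V)) |
        (fun v => if v = r then r else σ v (Fin.last q)) = f}) =
        Fintype.piFinset fun v => ({g | Function.Injective g ∧ (∀ j, g j ≠ v) ∧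
          g (if v = r then 0 else Fin.last q) = if v = r then s else f v} :
            Finset (Fin (q + 1) → V)) := by
      ext σ
      simp only [Finset.mem_filter, Finset.mem_univ, true_and, Fintype.mem_piFinset]
      constructor
      · rintro ⟨⟨⟨h1, h2, -⟩, h4⟩, rfl⟩ v
        refine ⟨h1 v, h2 v, ?_⟩
        by_cases hv : v = r
        · subst hv; simpa using h4
        · simp [hv]
      · intro h
        have hlast : ∀ v, v ≠ r → σ v (Fin.last q) = f v := fun v hv => by
          simpa [hv] using (h v).2.2
        refine ⟨⟨⟨fun v => (h v).1, fun v => (h v).2.1, fun X hr hX => ?_⟩,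
          by simpa using (h r).2.2⟩, funext fun v => ?_⟩
        · obtain ⟨v, hv, hfX⟩ := hac X (fun v hv => by
            simpa using fun h : v = r => hr (h ▸ hv)) hX
          exact ⟨v, hv, by rwa [hlast v fun h => hr (h ▸ hv)]⟩
        · by_cases hv : v = r
          · rw [if_pos hv, hv, hfr]
          · rw [if_neg hv, hlast v hv]
    rw [hpi, Fintype.card_piFinset, Finset.prod_congr rfl fun v _ =>
      card_injective_avoiding_with_value hV (v := v) (w := if v = r then s else f v) (by
        by_cases hv : v = r
        · rw [if_pos hv, hv]; exact hrs.symm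
        · rw [if_neg hv]; exact hfv v hv) _]
    rw [Finset.prod_const, Finset.card_univ, hV]
  · intro σ hσ
    simp only [Finset.coe_filter, Finset.mem_univ, true_and, Set.mem_ofPred_eq] at hσ
    simp only [rootedForests, Finset.coe_filter, Finset.mem_univ, true_and, Set.mem_ofPred_eq]
    refine ⟨fun v _ => by simp, fun v hv => ?_, fun X hX hne => ?_⟩
    · have : v = r := by simpa using hv
      simp [this]
    · have hr : r ∉ X := fun h => by simpa using hX h
      obtain ⟨v, hv, hvX⟩ := hσ.1.2.2 X hr hne
      exact ⟨v, hv, by rwa [if_neg fun h : v = r => hr (h ▸ hv)]⟩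

theorem card_eulerianTours [NeZero N] (hV : Fintype.card V = q + 2)
    (hN : N = (q + 2) * (q + 1)) {r s : V} (hrs : r ≠ s) :
    Nat.card {c : ZMod N → V // IsEulerianTour N (fun t => c t) ∧ c 0 = r ∧ c 1 = s} =
      (q + 2) ^ q * q.factorial ^ (q + 2) := by
  rw [← card_isRotorTree hV hrs]
  have hpos : 0 < N := NeZero.pos N
  have hstart : ∀ {σ : V → Fin (q + 1) → V} {x : ℕ → V}, FollowsRotors σ x N →
      x 1 = σ (x 0) 0 := fun h => by
    rw [(h 0 hpos).2]; simp [visits]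
  have hex : ∀ σ : {σ : V → Fin (q + 1) → V // IsRotorTree r σ ∧ σ r 0 = s},
      ∃ c : {c : ZMod N → V // IsEulerianTour N (fun t => c t) ∧ c 0 = r ∧ c 1 = s},
        FollowsRotors σ.1 (fun t => c.1 t) N := by
    rintro ⟨σ, hσ, hs⟩
    obtain ⟨x, h0, hx, hE⟩ := hσ.exists_followsRotors hV hN
    have hcast : ∀ t ≤ N, x (t : ZMod N).val = x t := by
      intro t ht
      rcases ht.lt_or_eq with h | rfl
      · rw [ZMod.val_natCast_of_lt h]
      · rw [ZMod.natCast_self, ZMod.val_zero, hE.1]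
    have hvis : ∀ t ≤ N, visits (fun t : ℕ => x (t : ZMod N).val) t = visits x t := by
      intro t
      induction t with
      | zero => intro _; funext v; simp [visits]
      | succ t ih =>
        intro ht
        funext v
        rw [visits_succ, visits_succ, ih (by omega), hcast t (by omega)]
    have hfol : FollowsRotors σ (fun t : ℕ => x (t : ZMod N).val) N := by
      intro t ht
      have := hx t ht
      simpa only [hvis t ht.le, hcast t ht.le, hcast (t + 1) ht] using this
    have hx0 : x (0 : ZMod N).val = r := by rw [ZMod.val_zero, h0]
    refine ⟨⟨fun i => x i.val, ⟨?_, fun a b hab => ?_⟩, hx0, ?_⟩, hfol⟩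
    · simp
    · obtain ⟨t, ⟨ht, h1, h2⟩, hu⟩ := hE.2 a b hab
      refine ⟨t, ⟨ht, (hcast t ht.le).trans h1, (hcast (t + 1) ht).trans h2⟩, ?_⟩
      rintro t' ⟨ht', h1', h2'⟩
      exact hu t' ⟨ht', (hcast t' ht'.le).symm.trans h1', (hcast (t' + 1) ht').symm.trans h2'⟩
    · have := hstart hfol
      simp only [Nat.cast_one, Nat.cast_zero, hx0] at this
      exact this.trans hs
  choose g hg using hex
  refine (Nat.card_congr (Equiv.ofBijective g ⟨fun σ σ' h => ?_, fun c => ?_⟩)).symm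
  · have h' := hg σ'
    rw [← h] at h'
    exact Subtype.ext ((hg σ).rotors_unique h' ((g σ).2.1.visits_eq hV hN))
  · obtain ⟨σ, hσ, hf⟩ := c.2.1.exists_isRotorTree hV hN
    simp only [Nat.cast_zero, c.2.2.1] at hσ
    have hs := hstart hf
    simp only [Nat.cast_zero, Nat.cast_one, c.2.2.1, c.2.2.2] at hs
    refine ⟨⟨σ, hσ, hs.symm⟩, Subtype.ext (funext fun i => ?_)⟩
    have := (hg ⟨σ, hσ, hs.symm⟩).eq_of_start hf
      (by simp [c.2.2.1, (g ⟨σ, hσ, hs.symm⟩).2.2.1]) (ZMod.val_lt i).le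
    simpa using this

end

theorem isUniversalCycle_two_iff {n N : ℕ} {c : ZMod N → Fin n} :
    IsUniversalCycle n 2 N c ↔ ∀ a b, a ≠ b → ∃! i, c i = a ∧ c (i + 1) = b := by
  simp only [IsUniversalCycle, Fin.forall_fin_two, Fin.val_zero, Fin.val_one, Nat.cast_zero,
    Nat.cast_one, add_zero]
  refine ⟨fun h a b hab => ?_, fun h w hw => h _ _ fun h01 => by simpa using hw h01⟩
  exact h ![a, b] fun i j hij => by fin_cases i <;> fin_cases j <;> simp_all [eq_comm]

theorem isUniversalCycle_two_iff_isEulerianTour {n N : ℕ} [NeZero N] {c : ZMod N → Fin n} :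
    IsUniversalCycle n 2 N c ↔ IsEulerianTour N (fun t => c t) := by
  simp only [isUniversalCycle_two_iff, IsEulerianTour, CharP.cast_eq_zero, Nat.cast_zero,
    Nat.cast_add, Nat.cast_one, true_and]
  refine forall₃_congr fun a b _ => ⟨?_, ?_⟩
  · rintro ⟨i, hi, hu⟩
    refine ⟨i.val, ⟨ZMod.val_lt i, by simpa using hi⟩, ?_⟩
    rintro t ⟨ht, h⟩
    rw [← hu t h, ZMod.val_natCast_of_lt ht]
  · rintro ⟨t, ⟨-, h⟩, hu⟩
    refine ⟨t, h, fun i hi => ?_⟩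
    rw [← hu i.val ⟨ZMod.val_lt i, by simpa using hi⟩, ZMod.natCast_zmod_val]

theorem IsUniversalCycle.rotate {n k N : ℕ} {c : ZMod N → Fin n}
    (hc : IsUniversalCycle n k N c) (t : ZMod N) : IsUniversalCycle n k N fun i => c (i + t) := by
  intro w hw
  obtain ⟨i, hi, hu⟩ := hc w hw
  refine ⟨i - t, fun j => ?_, fun i' hi' => eq_sub_of_add_eq (hu _ fun j => ?_)⟩
  · simpa [add_right_comm _ _ t] using hi j
  · simpa [add_right_comm _ _ t] using hi' j

theorem rotEquiv_equivalence {n k N : ℕ} : Equivalence (RotEquiv (n := n) (k := k) (N := N)) where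
  refl c := ⟨0, by simp⟩
  symm := by
    rintro c c' ⟨t, h⟩
    exact ⟨-t, fun i => by rw [h, neg_add_cancel_right]⟩
  trans := by
    rintro c c' c'' ⟨t, h⟩ ⟨t', h'⟩
    exact ⟨t' + t, fun i => by rw [h', h, add_assoc]⟩

/-- Every rotation class of universal cycles has exactly one member that starts with `r, s`. -/
theorem card_quot_rotEquiv {n N : ℕ} {r s : Fin n} (hrs : r ≠ s) :
    Nat.card (Quot (RotEquiv (n := n) (k := 2) (N := N))) =
      Nat.card {c : ZMod N → Fin n // IsUniversalCycle n 2 N c ∧ c 0 = r ∧ c 1 = s} := by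
  refine (Nat.card_congr (Equiv.ofBijective
    (fun c => Quot.mk _ ⟨c.1, c.2.1⟩) ⟨fun c c' h => ?_, fun z => ?_⟩)).symm
  · obtain ⟨t, ht⟩ := rotEquiv_equivalence.eqvGen_iff.1 (Quot.eqvGen_exact h)
    have h0 : t = 0 := by
      refine (isUniversalCycle_two_iff.1 c.2.1 r s hrs).unique ⟨?_, ?_⟩ ⟨c.2.2.1, ?_⟩
      · simpa [c'.2.2.1] using (ht 0).symm
      · simpa [c'.2.2.2, add_comm] using (ht 1).symm
      · rw [zero_add, c.2.2.2]
    refine Subtype.ext (funext fun i => ?_)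
    rw [ht, h0, add_zero]
  · obtain ⟨c, rfl⟩ := Quot.exists_rep z
    obtain ⟨t, ⟨h0, h1⟩, -⟩ := isUniversalCycle_two_iff.1 c.2 r s hrs
    refine ⟨⟨fun i => c.1 (i + t), c.2.rotate t, by simpa using h0,
      by simpa [add_comm] using h1⟩, ?_⟩
    exact (Quot.sound ⟨t, fun i => rfl⟩).symm

theorem num_ucycles_k2 (n : ℕ) (hn : 3 ≤ n) :
    Nat.card (Quot (RotEquiv (n := n) (k := 2) (N := n * (n - 1)))) =
      n ^ (n - 2) * (Nat.factorial (n - 2)) ^ n := by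
  obtain ⟨q, rfl⟩ := Nat.exists_eq_add_of_le' (show 2 ≤ n by omega)
  have : NeZero ((q + 2) * (q + 2 - 1)) := ⟨by simp⟩
  have hrs : (0 : Fin (q + 2)) ≠ 1 := by simp
  rw [card_quot_rotEquiv hrs]
  simp only [isUniversalCycle_two_iff_isEulerianTour]
  exact card_eulerianTours (by simp) rfl hrs
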